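/- For a real 2×3 matrix a = (a_{αi}) (rows indexed by α ∈ {1,2}, columns by i ∈ {1,2,3}), define F(a) = 8 det(a aᵀ) − ‖a‖⁴ (Frobenius norm), M = { a : ‖a‖² = 1 and F(a) = 0 }, and the complex-valued functions: κ(a) = k₁ + i k₂ where (k₁,k₂,k₃) is the cross product of the two rows of a; β(a) = (aᵀa)₁₁ − (aᵀa)₂₂ + 2i (aᵀa)₁₂; ρ(a) = −2r₁₂ + i(r₁₁ − r₂₂), where r_{jk} = a_{1j} ∂F/∂a_{2k} + a_{1k} ∂F/∂a_{2j} − a_{2j} ∂F/∂a_{1k} − a_{2k} ∂F/∂a_{1j}. Then for every integer p ≥ 0, the family of functions M → ℂ given by { κ^i β^j : i, j ∈ ℕ, i + 2j = 2p } ∪ { κ^i β^j ρ : i, j ∈ ℕ, i + 2j = 2p − 2 } is linearly independent over ℂ. -/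

import Mathlib

/-!
The family is restricted to the curve of points
`a(x) = (σ, 0, 0; 0, τ x, τ s)` of `M`, where `x² + s² = 1`, `σ² + τ² = 1` and `σ² τ² = 1/8`
with `σ² ≠ τ²`. Along it `κ = -i σ τ s`, `β = σ² - τ² x²` and `ρ = -32 σ τ (σ² - τ²) x`
(`kappaF_curve`, `betaF_curve`, `rhoF_curve`). Hence `β` and `κ` are even in `x` and `ρ` is odd,
so taking even and odd parts in `x` separates the two families.

Within one family the exponents satisfy `i + 2j = n` for a fixed `n`, so
`κ^i β^j = κ^n (β/κ²)^j`. The quotient `β/κ²` is injective for `0 < x < 1`, because it is a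
nondegenerate fractional linear function of `x²`; its powers are therefore linearly independent,
as a nonzero polynomial has only finitely many roots (`linearIndependent_kappa_beta`).
-/

open Matrix

/-- The Cartan–Münzner polynomial `F(a) = 8 det(a aᵀ) - ‖a‖⁴` on real 2×3
matrices, represented as elements of `Fin 2 → Fin 3 → ℝ`. -/
noncomputable def FCM (a : Fin 2 → Fin 3 → ℝ) : ℝ :=
  8 * (Matrix.of a * (Matrix.of a)ᵀ).det - (∑ α, ∑ i, a α i ^ 2) ^ 2

/-- The set `M = {a : ‖a‖² = 1, F(a) = 0}`. -/
noncomputable def MSet : Set (Fin 2 → Fin 3 → ℝ) :=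
  {a | (∑ α, ∑ i, a α i ^ 2) = 1 ∧ FCM a = 0}

/-- The partial derivative `∂F/∂a_{αi}`. -/
noncomputable def pdF (α : Fin 2) (i : Fin 3) (a : Fin 2 → Fin 3 → ℝ) : ℝ :=
  fderiv ℝ FCM a (Pi.single α (Pi.single i 1))

/-- `κ(a) = k₁ + i k₂`, where `(k₁,k₂,k₃)` is the cross product of the two
rows of `a`. -/
noncomputable def kappaF (a : Fin 2 → Fin 3 → ℝ) : ℂ :=
  ((a 0 1 * a 1 2 - a 0 2 * a 1 1 : ℝ) : ℂ)
    + Complex.I * ((a 0 2 * a 1 0 - a 0 0 * a 1 2 : ℝ) : ℂ)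

/-- `β(a) = (aᵀa)₁₁ - (aᵀa)₂₂ + 2i (aᵀa)₁₂`. -/
noncomputable def betaF (a : Fin 2 → Fin 3 → ℝ) : ℂ :=
  ((((Matrix.of a)ᵀ * Matrix.of a) 0 0 - ((Matrix.of a)ᵀ * Matrix.of a) 1 1 : ℝ) : ℂ)
    + 2 * Complex.I * ((((Matrix.of a)ᵀ * Matrix.of a) 0 1 : ℝ) : ℂ)

/-- `r_{jk} = a_{1j} ∂F/∂a_{2k} + a_{1k} ∂F/∂a_{2j} - a_{2j} ∂F/∂a_{1k}
- a_{2k} ∂F/∂a_{1j}`. -/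
noncomputable def rF (j k : Fin 3) (a : Fin 2 → Fin 3 → ℝ) : ℝ :=
  a 0 j * pdF 1 k a + a 0 k * pdF 1 j a - a 1 j * pdF 0 k a - a 1 k * pdF 0 j a

/-- `ρ(a) = -2r₁₂ + i(r₁₁ - r₂₂)`. -/
noncomputable def rhoF (a : Fin 2 → Fin 3 → ℝ) : ℂ :=
  ((-2 * rF 0 1 a : ℝ) : ℂ) + Complex.I * ((rF 0 0 a - rF 1 1 a : ℝ) : ℂ)

/-- The curve in `M` on which all functions are evaluated. -/
def curvePt (σ τ x s : ℝ) : Fin 2 → Fin 3 → ℝ := ![![σ, 0, 0], ![0, τ * x, τ * s]]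

theorem FCM_vec (a b c d e f : ℝ) :
    FCM ![![a, b, c], ![d, e, f]] =
      8 * ((a ^ 2 + b ^ 2 + c ^ 2) * (d ^ 2 + e ^ 2 + f ^ 2) - (a * d + b * e + c * f) ^ 2)
        - (a ^ 2 + b ^ 2 + c ^ 2 + d ^ 2 + e ^ 2 + f ^ 2) ^ 2 := by
  unfold FCM
  simp only [Matrix.det_fin_two, Matrix.mul_apply]
  simp [Fin.sum_univ_succ]
  ring

theorem differentiable_FCM : Differentiable ℝ FCM := by
  unfold FCM
  simp only [Matrix.det_fin_two, Matrix.mul_apply, Fin.sum_univ_succ, Matrix.of_apply,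
    Matrix.transpose_apply]
  fun_prop

/-- `∂F/∂a_{αi}` is the linear coefficient of `F` along the line through `a` in direction
`(α, i)`. -/
theorem pdF_eq_of_quartic (α : Fin 2) (i : Fin 3) (a : Fin 2 → Fin 3 → ℝ) (c₀ c₁ c₂ c₃ c₄ : ℝ)
    (h : ∀ t : ℝ, FCM (a + t • (Pi.single α (Pi.single i 1) : Fin 2 → Fin 3 → ℝ)) =
      c₀ + c₁ * t + c₂ * t ^ 2 + c₃ * t ^ 3 + c₄ * t ^ 4) : pdF α i a = c₁ := by
  unfold pdF
  rw [← (differentiable_FCM a).lineDeriv_eq_fderiv, lineDeriv, funext h]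
  have hd : HasDerivAt (fun t : ℝ => c₀ + c₁ * t + c₂ * t ^ 2 + c₃ * t ^ 3 + c₄ * t ^ 4)
      (0 + c₁ * 1 + c₂ * (2 * 0 ^ 1 * 1) + c₃ * (3 * 0 ^ 2 * 1) + c₄ * (4 * 0 ^ 3 * 1)) 0 := by
    have h0 := hasDerivAt_id (0 : ℝ)
    exact (((((hasDerivAt_const (0 : ℝ) c₀).add (h0.const_mul c₁)).add
      ((h0.pow 2).const_mul c₂)).add ((h0.pow 3).const_mul c₃)).add ((h0.pow 4).const_mul c₄))
  rw [hd.deriv]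
  ring

theorem curvePt_mem {σ τ x s : ℝ} (h1 : σ ^ 2 + τ ^ 2 = 1) (h2 : σ ^ 2 * τ ^ 2 = 1 / 8)
    (hx : x ^ 2 + s ^ 2 = 1) : curvePt σ τ x s ∈ MSet := by
  have hn : (τ * x) ^ 2 + (τ * s) ^ 2 = τ ^ 2 := by linear_combination τ ^ 2 * hx
  refine ⟨?_, ?_⟩
  · simp [curvePt, Fin.sum_univ_succ]
    linear_combination hn + h1
  · rw [curvePt, FCM_vec]
    have e1 : σ ^ 2 + 0 ^ 2 + 0 ^ 2 + 0 ^ 2 + (τ * x) ^ 2 + (τ * s) ^ 2 = 1 := by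
      linear_combination hn + h1
    rw [e1]
    linear_combination 8 * σ ^ 2 * hn + 8 * h2

theorem kappaF_curve (σ τ x s : ℝ) :
    kappaF (curvePt σ τ x s) = -(Complex.I * ((σ * τ * s : ℝ) : ℂ)) := by
  simp [kappaF, curvePt]
  ring

theorem betaF_curve (σ τ x s : ℝ) :
    betaF (curvePt σ τ x s) = ((σ ^ 2 - τ ^ 2 * x ^ 2 : ℝ) : ℂ) := by
  simp [betaF, curvePt, Matrix.mul_apply]
  ring

theorem rhoF_curve {σ τ x s : ℝ} (h1 : σ ^ 2 + τ ^ 2 = 1) (hx : x ^ 2 + s ^ 2 = 1) :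
    rhoF (curvePt σ τ x s) = ((-32 * σ * τ * (σ ^ 2 - τ ^ 2) * x : ℝ) : ℂ) := by
  have hn : (τ * x) ^ 2 + (τ * s) ^ 2 = τ ^ 2 := by linear_combination τ ^ 2 * hx
  have p10 : pdF 1 0 (curvePt σ τ x s) = 0 := by
    refine pdF_eq_of_quartic _ _ _ (8 * σ ^ 2 * τ ^ 2 - 1) _ (-2) 0 (-1) fun t => ?_
    have : curvePt σ τ x s + t • (Pi.single 1 (Pi.single 0 1) : Fin 2 → Fin 3 → ℝ)
        = ![![σ, 0, 0], ![t, τ * x, τ * s]] := by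
      ext i j; fin_cases i <;> fin_cases j <;> simp [curvePt]
    rw [this, FCM_vec]
    have e1 : σ ^ 2 + 0 ^ 2 + 0 ^ 2 + t ^ 2 + (τ * x) ^ 2 + (τ * s) ^ 2 = 1 + t ^ 2 := by
      linear_combination hn + h1
    rw [e1]
    linear_combination 8 * σ ^ 2 * hn
  have p01 : pdF 0 1 (curvePt σ τ x s) = 0 := by
    refine pdF_eq_of_quartic _ _ _ (8 * σ ^ 2 * τ ^ 2 - 1) _
      (8 * τ ^ 2 - 8 * (τ * x) ^ 2 - 2) 0 (-1) fun t => ?_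
    have : curvePt σ τ x s + t • (Pi.single 0 (Pi.single 1 1) : Fin 2 → Fin 3 → ℝ)
        = ![![σ, t, 0], ![0, τ * x, τ * s]] := by
      ext i j; fin_cases i <;> fin_cases j <;> simp [curvePt]
    rw [this, FCM_vec]
    have e1 : σ ^ 2 + t ^ 2 + 0 ^ 2 + 0 ^ 2 + (τ * x) ^ 2 + (τ * s) ^ 2 = 1 + t ^ 2 := by
      linear_combination hn + h1
    rw [e1]
    linear_combination 8 * (σ ^ 2 + t ^ 2) * hn
  have p00 : pdF 0 0 (curvePt σ τ x s) = 16 * τ ^ 2 * σ - 4 * σ := by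
    refine pdF_eq_of_quartic _ _ _ (8 * σ ^ 2 * τ ^ 2 - 1) _
      (8 * τ ^ 2 - 2 - 4 * σ ^ 2) (-4 * σ) (-1) fun t => ?_
    have : curvePt σ τ x s + t • (Pi.single 0 (Pi.single 0 1) : Fin 2 → Fin 3 → ℝ)
        = ![![σ + t, 0, 0], ![0, τ * x, τ * s]] := by
      ext i j; fin_cases i <;> fin_cases j <;> simp [curvePt]
    rw [this, FCM_vec]
    have e1 : (σ + t) ^ 2 + 0 ^ 2 + 0 ^ 2 + 0 ^ 2 + (τ * x) ^ 2 + (τ * s) ^ 2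
        = 1 + 2 * σ * t + t ^ 2 := by
      linear_combination hn + h1
    rw [e1]
    linear_combination 8 * (σ + t) ^ 2 * hn
  have p11 : pdF 1 1 (curvePt σ τ x s) = 16 * σ ^ 2 * (τ * x) - 4 * (τ * x) := by
    refine pdF_eq_of_quartic _ _ _ (8 * σ ^ 2 * τ ^ 2 - 1) _
      (8 * σ ^ 2 - 2 - 4 * (τ * x) ^ 2) (-4 * (τ * x)) (-1) fun t => ?_
    have : curvePt σ τ x s + t • (Pi.single 1 (Pi.single 1 1) : Fin 2 → Fin 3 → ℝ)
        = ![![σ, 0, 0], ![0, τ * x + t, τ * s]] := by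
      ext i j; fin_cases i <;> fin_cases j <;> simp [curvePt]
    rw [this, FCM_vec]
    have e1 : σ ^ 2 + 0 ^ 2 + 0 ^ 2 + 0 ^ 2 + (τ * x + t) ^ 2 + (τ * s) ^ 2
        = 1 + 2 * (τ * x) * t + t ^ 2 := by
      linear_combination hn + h1
    rw [e1]
    linear_combination 8 * σ ^ 2 * hn
  simp only [rhoF, rF, p10, p01, p00, p11]
  simp [curvePt]
  ring

/-- Two numbers with sum of squares `1` and product of squares `1/8`: the singular values of the
points of `M`. -/
theorem exists_singular_values : ∃ σ τ : ℝ, σ ^ 2 + τ ^ 2 = 1 ∧ σ ^ 2 * τ ^ 2 = 1 / 8 ∧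
    σ ≠ 0 ∧ τ ≠ 0 ∧ σ ^ 2 - τ ^ 2 ≠ 0 := by
  have hr : √(1 / 2 : ℝ) ^ 2 = 1 / 2 := Real.sq_sqrt (by norm_num)
  have hpos : 0 < √(1 / 2 : ℝ) := Real.sqrt_pos.2 (by norm_num)
  generalize √(1 / 2 : ℝ) = r at hr hpos
  have hlt : r < 1 := by nlinarith
  have h1 : √((1 + r) / 2) ^ 2 = (1 + r) / 2 := Real.sq_sqrt (by linarith)
  have h2 : √((1 - r) / 2) ^ 2 = (1 - r) / 2 := Real.sq_sqrt (by linarith)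
  refine ⟨√((1 + r) / 2), √((1 - r) / 2), ?_, ?_, ?_, ?_, ?_⟩
  · rw [h1, h2]; ring
  · rw [h1, h2]; linear_combination -(1 / 4) * hr
  · exact (Real.sqrt_pos.2 (by linarith)).ne'
  · exact (Real.sqrt_pos.2 (by linarith)).ne'
  · rw [h1, h2]; intro h; linarith

theorem linearIndependent_of_family_eq {ι V : Type*} [AddCommMonoid V] [Module ℂ V]
    {v v' : ι → V} (hv : LinearIndependent ℂ v) (h : ∀ i, v' i = v i) :
    LinearIndependent ℂ v' :=
  funext h ▸ hv

theorem linearIndependent_pow_of_injective {T : Type*} [Infinite T] (z : T → ℂ)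
    (hz : Function.Injective z) : LinearIndependent ℂ (fun (j : ℕ) (t : T) => z t ^ j) := by
  have h := (Polynomial.basisMonomials ℂ).linearIndependent.map'
    (LinearMap.pi fun t : T => Polynomial.leval (z t)) <| by
      rw [LinearMap.ker_eq_bot']
      intro q hq
      refine Polynomial.eq_zero_of_infinite_isRoot q
        ((Set.infinite_range_of_injective hz).mono ?_)
      rintro _ ⟨t, rfl⟩
      exact congrFun hq t
  have he : (fun (j : ℕ) (t : T) => z t ^ j) =
      (LinearMap.pi fun t : T => Polynomial.leval (z t)) ∘ Polynomial.basisMonomials ℂ := by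
    ext j t
    simp [Polynomial.leval]
  rw [he]
  exact h

/-- Weighted monomials `κ^i β^j w` of fixed weighted degree `i + 2j` are independent as soon as
`κ`, `w` do not vanish and `β/κ²` is injective on an infinite set: they equal
`κ^(i+2j) w (β/κ²)^j`. -/
theorem linearIndependent_kappa_beta {T : Type*} [Infinite T] (k b w : T → ℂ) (e n : ℕ)
    (hk : ∀ t, k t ≠ 0) (hw : ∀ t, w t ≠ 0)
    (hz : Function.Injective fun t => b t / k t ^ 2) :
    LinearIndependent ℂ (fun (ij : {ij : ℕ × ℕ // ij.1 + 2 * ij.2 + e = n}) (t : T) =>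
      k t ^ ij.1.1 * b t ^ ij.1.2 * w t) := by
  refine LinearIndependent.of_comp
    (LinearMap.mulRight ℂ (fun t : T => (k t ^ (n - e) * w t)⁻¹)) ?_
  have hinj : Function.Injective
      (fun ij : {ij : ℕ × ℕ // ij.1 + 2 * ij.2 + e = n} => ij.1.2) := by
    rintro ⟨⟨i, j⟩, h⟩ ⟨⟨i', j'⟩, h'⟩ hj
    simp only at h h' hj
    simp only [Subtype.mk.injEq, Prod.mk.injEq]
    omega
  refine linearIndependent_of_family_eq
    ((linearIndependent_pow_of_injective _ hz).comp _ hinj) ?_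
  rintro ⟨⟨i, j⟩, h⟩
  ext t
  have hn : n - e = i + 2 * j := by simp only at h; omega
  have := hk t
  have := hw t
  simp only [Function.comp_apply, LinearMap.mulRight_apply, Pi.mul_apply, hn, pow_add, div_pow,
    pow_mul]
  field_simp

/-- for every `p ≥ 0`, the family of functions `M → ℂ` given by
`{ κ^i β^j : i + 2j = 2p } ∪ { κ^i β^j ρ : i + 2j = 2p - 2 }` (the second
family being empty when `p = 0`, the condition being written `i + 2j + 2 = 2p`
to avoid truncated subtraction) is linearly independent over `ℂ`. -/
theorem stmt15 (p : ℕ) :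
    LinearIndependent ℂ
      (fun idx : {ij : ℕ × ℕ // ij.1 + 2 * ij.2 = 2 * p}
          ⊕ {ij : ℕ × ℕ // ij.1 + 2 * ij.2 + 2 = 2 * p} =>
        match idx with
        | .inl ij => fun a : MSet => kappaF a.1 ^ ij.1.1 * betaF a.1 ^ ij.1.2
        | .inr ij => fun a : MSet =>
            kappaF a.1 ^ ij.1.1 * betaF a.1 ^ ij.1.2 * rhoF a.1) := by
  obtain ⟨σ, τ, h1, h2, hσ, hτ, hd⟩ := exists_singular_values
  let T := Set.Ioo (0 : ℝ) 1
  have : Infinite T := (Set.Ioo_infinite one_pos).to_subtype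
  let s : T → ℝ := fun x => √(1 - x.1 ^ 2)
  have hlt (x : T) : 0 < 1 - x.1 ^ 2 := by
    obtain ⟨x, hx0, hx1⟩ := x
    simp only
    nlinarith
  have hs (x : T) : s x ^ 2 = 1 - x.1 ^ 2 := Real.sq_sqrt (hlt x).le
  have hs0 (x : T) : s x ≠ 0 := (Real.sqrt_pos.2 (hlt x)).ne'
  have hxp (x : T) : x.1 ^ 2 + s x ^ 2 = 1 := by rw [hs]; ring
  have hxm (x : T) : (-x.1) ^ 2 + s x ^ 2 = 1 := by rw [hs]; ring
  let P : T → MSet := fun x => ⟨curvePt σ τ x.1 (s x), curvePt_mem h1 h2 (hxp x)⟩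
  let N : T → MSet := fun x => ⟨curvePt σ τ (-x.1) (s x), curvePt_mem h1 h2 (hxm x)⟩
  let k : T → ℂ := fun x => -(Complex.I * ((σ * τ * s x : ℝ) : ℂ))
  let b : T → ℂ := fun x => ((σ ^ 2 - τ ^ 2 * x.1 ^ 2 : ℝ) : ℂ)
  let w : T → ℂ := fun x => ((-32 * σ * τ * (σ ^ 2 - τ ^ 2) * x.1 : ℝ) : ℂ)
  have hk (x : T) : k x ≠ 0 :=
    neg_ne_zero.2 (mul_ne_zero Complex.I_ne_zero
      (Complex.ofReal_ne_zero.2 (mul_ne_zero (mul_ne_zero hσ hτ) (hs0 x))))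
  have hw (x : T) : w x ≠ 0 :=
    Complex.ofReal_ne_zero.2 (mul_ne_zero
      (mul_ne_zero (mul_ne_zero (mul_ne_zero (by norm_num) hσ) hτ) hd) x.2.1.ne')
  have hk2 (x : T) : k x ^ 2 = ((-(1 / 8) * (1 - x.1 ^ 2) : ℝ) : ℂ) := by
    have : (σ * τ * s x) ^ 2 = 1 / 8 * (1 - x.1 ^ 2) := by
      rw [mul_pow, mul_pow, h2, hs]
    simp only [k]
    rw [neg_sq, mul_pow, Complex.I_sq, ← Complex.ofReal_pow, this]
    push_cast
    ring
  have hz : Function.Injective fun x => b x / k x ^ 2 := by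
    intro x y hxy
    simp only [hk2, b, ← Complex.ofReal_div, Complex.ofReal_inj] at hxy
    have hx := hlt x
    have hy := hlt y
    rw [div_eq_div_iff (mul_ne_zero (by norm_num) hx.ne') (mul_ne_zero (by norm_num) hy.ne')] at hxy
    have h0 : (σ ^ 2 - τ ^ 2) * (x.1 ^ 2 - y.1 ^ 2) = 0 := by linear_combination (-8) * hxy
    have h3 : x.1 ^ 2 = y.1 ^ 2 := sub_eq_zero.1 ((mul_eq_zero.1 h0).resolve_left hd)
    exact Subtype.ext ((sq_eq_sq₀ x.2.1.le y.2.1.le).1 h3)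
  -- The even and odd parts in `x` of a function on the curve.
  let L : (MSet → ℂ) →ₗ[ℂ] (T → ℂ) × (T → ℂ) :=
    LinearMap.prod
      ((2⁻¹ : ℂ) • (LinearMap.funLeft ℂ ℂ P + LinearMap.funLeft ℂ ℂ N))
      ((2⁻¹ : ℂ) • (LinearMap.funLeft ℂ ℂ P - LinearMap.funLeft ℂ ℂ N))
  refine LinearIndependent.of_comp L ?_
  have hE := linearIndependent_kappa_beta k b (fun _ => 1) 0 (2 * p) hk (fun _ => one_ne_zero) hz
  have hO := linearIndependent_kappa_beta k b w 2 (2 * p) hk hw hz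
  have kP (x : T) : kappaF (P x).1 = k x := kappaF_curve ..
  have kN (x : T) : kappaF (N x).1 = k x := kappaF_curve ..
  have bP (x : T) : betaF (P x).1 = b x := betaF_curve ..
  have bN (x : T) : betaF (N x).1 = b x := by
    simp only [N, b, betaF_curve, neg_sq]
  have rP (x : T) : rhoF (P x).1 = w x := rhoF_curve h1 (hxp x)
  have rN (x : T) : rhoF (N x).1 = -w x := by
    simp only [N, w, rhoF_curve h1 (hxm x)]
    push_cast
    ring
  refine linearIndependent_of_family_eq (linearIndependent_inl_union_inr' hE hO) ?_
  rintro (ij | ij)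
  · refine Prod.ext (funext fun x => ?_) (funext fun x => ?_)
    · simp [L, LinearMap.funLeft, kP, kN, bP, bN]
      ring
    · simp [L, LinearMap.funLeft, kP, kN, bP, bN]
  · refine Prod.ext (funext fun x => ?_) (funext fun x => ?_)
    · simp [L, LinearMap.funLeft, kP, kN, bP, bN, rP, rN]
    · simp [L, LinearMap.funLeft, kP, kN, bP, bN, rP, rN]
      ring
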